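/- Every element g of order 4 in the alternating group A_6 is contained in exactly two subgroups of A_6 that are isomorphic to the symmetric group S_4; that is, the set {S : Subgroup A_6 | S ≅ S_4 and g ∈ S} has exactly two elements. -/

import Mathlib

/-!
The group `S₄` is a quotient of the triangle group `⟨c, d ∣ c⁴ = d³ = (cd)² = 1⟩`, and every
element `c` of order four in `S₄` has a partner `d ≠ 1` with `d³ = (cd)² = 1` such that `c` and `d`
generate `S₄` (`exists_partner`).  So a subgroup `S ≅ S₄` of `A₆` containing `g` is generated by
`g` and some `d ≠ 1` with `d³ = (gd)² = 1`.

An even permutation of six points of order four has cycle type `(4, 2)`, so up to an automorphism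
of `A₆` induced by conjugation in `S₆` it is `g₀ = (0 1 2 3)(4 5)`.  Two copies of `S₄` in `A₆`
contain `g₀`: the images of the embeddings `intransHom` (four points, with `{4, 5}` swapped by the
odd permutations) and `pairHom` (action on the six two-element subsets of four points).  A finite
check (`partner_mem`) shows that every partner of `g₀` lies in one of the two images, so any
`S₄` containing `g₀` lies in one of them, and equals it by comparing orders.
-/

open Equiv

namespace A6S4

/-- The permutation `(0 1 2 3)(4 5)`. -/
def g₀ : Perm (Fin 6) where
  toFun := ![1, 2, 3, 0, 5, 4]
  invFun := ![3, 0, 1, 2, 5, 4]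
  left_inv := by decide
  right_inv := by decide

/-- The four-cycle `(0 1 2 3)`, sent to `g₀` by both embeddings below. -/
def c₀ : Perm (Fin 4) where
  toFun := ![1, 2, 3, 0]
  invFun := ![3, 0, 1, 2]
  left_inv := by decide
  right_inv := by decide

/-- The action of `S₄` on `Fin 6` in which `{0, 1, 2, 3}` carries the natural action and
`{4, 5}` the sign action. -/
def intransFun (σ : Perm (Fin 4)) : Fin 6 → Fin 6 :=
  ![(σ 0).castLE (by decide), (σ 1).castLE (by decide), (σ 2).castLE (by decide),
    (σ 3).castLE (by decide), if Perm.sign σ = 1 then 4 else 5, if Perm.sign σ = 1 then 5 else 4]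

/-- The label of the two-element subset `{a, b}` of `Fin 4`, in the order
`{0,1}, {1,2}, {2,3}, {0,3}, {0,2}, {1,3}`; the diagonal entries are irrelevant. -/
def pairIdx (a b : Fin 4) : Fin 6 :=
  !![0, 0, 4, 3; 0, 0, 1, 5; 4, 1, 0, 2; 3, 5, 2, 0] a b

/-- The action of `S₄` on the six two-element subsets of `Fin 4`, labelled by `pairIdx`. -/
def pairFun (σ : Perm (Fin 4)) : Fin 6 → Fin 6 :=
  ![pairIdx (σ 0) (σ 1), pairIdx (σ 1) (σ 2), pairIdx (σ 2) (σ 3), pairIdx (σ 0) (σ 3),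
    pairIdx (σ 0) (σ 2), pairIdx (σ 1) (σ 3)]

lemma intransFun_mul : ∀ σ τ i, intransFun (σ * τ) i = intransFun σ (intransFun τ i) := by
  decide +kernel

lemma pairFun_mul : ∀ σ τ i, pairFun (σ * τ) i = pairFun σ (pairFun τ i) := by
  decide +kernel

lemma intransFun_one : ∀ i, intransFun 1 i = i := by decide +kernel

lemma pairFun_one : ∀ i, pairFun 1 i = i := by decide +kernel

/-- A multiplicative family of self-maps of `Fin 6` as a homomorphism to `Perm (Fin 6)`. -/
def homOfFun (f : Perm (Fin 4) → Fin 6 → Fin 6) (h1 : ∀ i, f 1 i = i)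
    (hm : ∀ σ τ i, f (σ * τ) i = f σ (f τ i)) : Perm (Fin 4) →* Perm (Fin 6) where
  toFun σ :=
    { toFun := f σ
      invFun := f σ⁻¹
      left_inv := fun i => by rw [← hm, inv_mul_cancel, h1]
      right_inv := fun i => by rw [← hm, mul_inv_cancel, h1] }
  map_one' := Equiv.ext h1
  map_mul' σ τ := Equiv.ext (hm σ τ)

/-- The embedding `S₄ → A₆` as the stabilizer of `{4, 5}`. -/
def intransHom : Perm (Fin 4) →* alternatingGroup (Fin 6) :=
  (homOfFun intransFun intransFun_one intransFun_mul).codRestrict _ (by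
    simp only [Perm.mem_alternatingGroup]
    decide +kernel)

/-- The embedding `S₄ → A₆` given by the action on two-element subsets. -/
def pairHom : Perm (Fin 4) →* alternatingGroup (Fin 6) :=
  (homOfFun pairFun pairFun_one pairFun_mul).codRestrict _ (by
    simp only [Perm.mem_alternatingGroup]
    decide +kernel)

lemma intransHom_injective : Function.Injective intransHom := by
  rw [injective_iff_map_eq_one]
  decide +kernel

lemma pairHom_injective : Function.Injective pairHom := by
  rw [injective_iff_map_eq_one]
  decide +kernel

/-- Every element of order four in `S₄` has a partner with which it satisfies the relations of the
`(2, 3, 4)` triangle group and generates `S₄`, by words of a fixed shape. -/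
lemma exists_partner : ∀ c : Perm (Fin 4), c ^ 4 = 1 → c ^ 2 ≠ 1 →
    ∃ d : Perm (Fin 4), d ^ 3 = 1 ∧ d ≠ 1 ∧ (c * d) ^ 2 = 1 ∧
      ∀ x, ∃ i : Fin 4, ∃ j : Fin 3, ∃ k : Fin 4, ∃ l : Fin 3,
        x = c ^ i.val * d ^ j.val * c ^ k.val * d ^ l.val := by
  decide +kernel

/-- The partners of `g₀` (there are eight of them) all lie in one of the two embedded copies
of `S₄`. -/
lemma partner_mem : ∀ d : Perm (Fin 6), d ^ 3 = 1 → d ≠ 1 → (g₀ * d) ^ 2 = 1 →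
    (∃ σ, (intransHom σ : Perm (Fin 6)) = d) ∨ ∃ σ, (pairHom σ : Perm (Fin 6)) = d := by
  decide +kernel

lemma intransHom_c₀ : (intransHom c₀ : Perm (Fin 6)) = g₀ := by decide +kernel

lemma pairHom_c₀ : (pairHom c₀ : Perm (Fin 6)) = g₀ := by decide +kernel

/-- The transposition `(0 1)` acts as `(0 1)(4 5)` in the first copy, and no element of the
second copy does. -/
lemma range_ne : intransHom.range ≠ pairHom.range := by
  intro h
  have h1 : intransHom (swap 0 1) ∈ pairHom.range := h ▸ ⟨_, rfl⟩
  revert h1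
  rw [MonoidHom.mem_range]
  decide +kernel

/-- An even permutation of six points of order four has cycle type `(4, 2)`. -/
lemma isConj_g₀ (g : Perm (Fin 6)) (hs : Perm.sign g = 1) (hg : orderOf g = 4) :
    IsConj g₀ g := by
  have key : ∀ g : Perm (Fin 6), Perm.sign g = 1 → orderOf g = 4 → g.cycleType = {4, 2} := by
    intro g hs hg
    have hsum : g.cycleType.sum ≤ 6 := by
      rw [Perm.sum_cycleType]
      simpa using Finset.card_le_univ g.support
    have hlcm := Perm.lcm_cycleType g
    rw [hg] at hlcm
    have hdvd : ∀ n ∈ g.cycleType, n = 2 ∨ n = 4 := by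
      intro n hn
      have h2 := Perm.two_le_of_mem_cycleType hn
      have hd : n ∣ 4 := hlcm ▸ Multiset.dvd_lcm hn
      have := Nat.le_of_dvd (by norm_num) hd
      interval_cases n <;> simp_all
    have h4 : 4 ∈ g.cycleType := by
      by_contra h
      have : g.cycleType.lcm ∣ 2 := Multiset.lcm_dvd.2 fun n hn => by
        rcases hdvd n hn with rfl | rfl
        · exact dvd_rfl
        · exact absurd hn h
      rw [hlcm] at this
      norm_num at this
    have hsign := Perm.sign_of_cycleType g
    obtain ⟨t, ht⟩ := Multiset.exists_cons_of_mem h4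
    rw [ht] at hsum hdvd hsign ⊢
    rw [hs] at hsign
    -- the remaining cycles move at most two points, and parity excludes that there are none
    rcases t.empty_or_exists_mem with rfl | ⟨n, hn⟩
    · exact absurd hsign (by decide)
    · obtain ⟨u, rfl⟩ := Multiset.exists_cons_of_mem hn
      have hn2 : n = 2 := by
        rcases hdvd n (by simp) with h | h
        · exact h
        · simp [h] at hsum
          omega
      subst hn2
      rcases u.empty_or_exists_mem with rfl | ⟨m, hm⟩
      · rfl
      · obtain ⟨v, rfl⟩ := Multiset.exists_cons_of_mem hm
        have := hdvd m (by simp)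
        simp at hsum
        omega
  rw [Perm.isConj_iff_cycleType_eq, key g hs hg]
  refine key g₀ (by decide +kernel) ?_
  exact orderOf_eq_prime_pow (p := 2) (n := 1) (by decide +kernel) (by decide +kernel)

/-- A copy of `S₄` containing `α g₀`, for an automorphism `α` of `A₆`, is the `α`-image of one of
the two standard copies. -/
lemma eq_range_or (α : MulAut (alternatingGroup (Fin 6))) (b : alternatingGroup (Fin 6))
    (hb : (b : Perm (Fin 6)) = g₀) (hb4 : orderOf (α b) = 4)
    (S : Subgroup (alternatingGroup (Fin 6))) (e : S ≃* Perm (Fin 4)) (hS : α b ∈ S) :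
    S = intransHom.range.map α.toMonoidHom ∨ S = pairHom.range.map α.toMonoidHom := by
  set c : S := ⟨α b, hS⟩ with hc
  have hc4 : orderOf (e c) = 4 := by
    rw [MulEquiv.orderOf_eq, ← hb4, hc, Subgroup.orderOf_mk]
  obtain ⟨d, hd3, hd1, hcd, hgen⟩ := exists_partner (e c)
    (orderOf_dvd_iff_pow_eq_one.1 hc4.dvd)
    (fun h => by
      have := orderOf_dvd_of_pow_eq_one h
      rw [hc4] at this
      norm_num at this)
  obtain ⟨d, rfl⟩ := e.surjective d
  -- the partner, transported back along `α`
  set d' : alternatingGroup (Fin 6) := α.symm d with hd'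
  have hαd : α d' = d := α.apply_symm_apply _
  have hd3' : d ^ 3 = 1 := e.injective (by simpa using hd3)
  have hd1' : d ≠ 1 := fun h => hd1 (by simp [h])
  have hcd' : (c * d) ^ 2 = 1 := e.injective (by simpa using hcd)
  have k3 : d' ^ 3 = 1 := α.injective (by
    rw [map_pow, hαd, map_one]; exact_mod_cast congrArg Subtype.val hd3')
  have k1 : d' ≠ 1 := fun h => hd1' (Subtype.ext (by rw [← hαd, h, map_one]; rfl))
  have kcd : (b * d') ^ 2 = 1 := α.injective (by
    rw [map_pow, map_mul, hαd, map_one]; exact congrArg Subtype.val hcd')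
  have hmem : d' ∈ intransHom.range ∨ d' ∈ pairHom.range := by
    rcases partner_mem d' (by exact_mod_cast congrArg Subtype.val k3)
      (fun h => k1 (Subtype.ext h))
      (by rw [← hb]; exact_mod_cast congrArg Subtype.val kcd) with ⟨σ, h⟩ | ⟨σ, h⟩
    · exact Or.inl ⟨σ, Subtype.ext h⟩
    · exact Or.inr ⟨σ, Subtype.ext h⟩
  have main : ∀ φ : Perm (Fin 4) →* alternatingGroup (Fin 6), Function.Injective φ →
      b ∈ φ.range → d' ∈ φ.range → S = φ.range.map α.toMonoidHom := by
    intro φ hφ hbφ hdφ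
    have hcm : (c : alternatingGroup (Fin 6)) ∈ φ.range.map α.toMonoidHom := ⟨b, hbφ, rfl⟩
    have hdm : (d : alternatingGroup (Fin 6)) ∈ φ.range.map α.toMonoidHom := ⟨d', hdφ, hαd⟩
    refine Subgroup.eq_of_le_of_card_ge (fun x hx => ?_) ?_
    · obtain ⟨i, j, k, l, h⟩ := hgen (e ⟨x, hx⟩)
      have h' : (⟨x, hx⟩ : S) = c ^ i.val * d ^ j.val * c ^ k.val * d ^ l.val :=
        e.injective (by simpa using h)
      have h'' : x = (c : alternatingGroup (Fin 6)) ^ i.val * (d : alternatingGroup (Fin 6)) ^ j.val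
          * (c : alternatingGroup (Fin 6)) ^ k.val * (d : alternatingGroup (Fin 6)) ^ l.val :=
        congrArg Subtype.val h'
      rw [h'']
      exact mul_mem (mul_mem (mul_mem (pow_mem hcm _) (pow_mem hdm _)) (pow_mem hcm _))
        (pow_mem hdm _)
    · rw [Subgroup.card_map_of_injective α.injective, Nat.card_congr e.toEquiv,
        Nat.card_congr (φ.ofInjective hφ).toEquiv]
  rcases hmem with h | h
  · exact Or.inl (main _ intransHom_injective ⟨c₀, Subtype.ext (intransHom_c₀.trans hb.symm)⟩ h)
  · exact Or.inr (main _ pairHom_injective ⟨c₀, Subtype.ext (pairHom_c₀.trans hb.symm)⟩ h)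

end A6S4

open A6S4 in
/-- Every element of order 4 in `A₆` is contained in exactly two subgroups of
`A₆` isomorphic to the symmetric group `S₄`. -/
theorem a6_order_four_in_two_s4_subgroups
    (g : alternatingGroup (Fin 6)) (hg : orderOf g = 4) :
    {S : Subgroup (alternatingGroup (Fin 6)) |
      Nonempty (S ≃* Equiv.Perm (Fin 4)) ∧ g ∈ S}.ncard = 2 := by
  obtain ⟨h, hh⟩ := isConj_iff.1 (isConj_g₀ g (Perm.mem_alternatingGroup.1 g.2)
    (by rw [Subgroup.orderOf_coe, hg]))
  set α : MulAut (alternatingGroup (Fin 6)) := MulAut.conjNormal h with hα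
  have hbg : α (intransHom c₀) = g := Subtype.ext (by
    rw [hα, MulAut.conjNormal_apply, intransHom_c₀, hh])
  have hbb : intransHom c₀ = pairHom c₀ := Subtype.ext (intransHom_c₀.trans pairHom_c₀.symm)
  have iso : ∀ φ : Perm (Fin 4) →* alternatingGroup (Fin 6), Function.Injective φ →
      Nonempty (φ.range.map α.toMonoidHom ≃* Perm (Fin 4)) := fun φ hφ =>
    ⟨((φ.ofInjective hφ).trans (φ.range.equivMapOfInjective α.toMonoidHom α.injective)).symm⟩
  rw [Set.ncard_eq_two]
  refine ⟨intransHom.range.map α.toMonoidHom, pairHom.range.map α.toMonoidHom,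
    fun h => range_ne (Subgroup.map_injective α.injective h), ?_⟩
  ext S
  simp only [Set.mem_ofPred_eq, Set.mem_insert_iff, Set.mem_singleton_iff]
  constructor
  · rintro ⟨⟨e⟩, hS⟩
    exact eq_range_or α (intransHom c₀) intransHom_c₀ (by rw [hbg, hg]) S e (by rwa [hbg])
  · rintro (rfl | rfl)
    · exact ⟨iso _ intransHom_injective, _, ⟨c₀, rfl⟩, hbg⟩
    · exact ⟨iso _ pairHom_injective, _, ⟨c₀, rfl⟩, hbb ▸ hbg⟩
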